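/- arXiv:2206.00215 — 8 statements merged into one kernel-verified Lean document; each statement's English description precedes it below -/
import Mathlib

section
/- For every n : ℕ and all a b : Fin n → Fin 4, the trace of P_a * P_b equals 2^n if a = b and equals 0 otherwise. -/
open Matrix Complex Kronecker

noncomputable def pauli : Fin 4 → Matrix (Fin 2) (Fin 2) ℂ
  | 0 => !![1, 0; 0, 1]
  | 1 => !![0, 1; 1, 0]
  | 2 => !![0, -Complex.I; Complex.I, 0]
  | 3 => !![1, 0; 0, -1]

noncomputable def PauliString {n : ℕ} (a : Fin n → Fin 4) :
    Matrix (Fin n → Fin 2) (Fin n → Fin 2) ℂ :=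
  Matrix.of fun f g => ∏ i, pauli (a i) (f i) (g i)

theorem pauli_single (x y : Fin 4) :
    (∑ j, ∑ k, pauli x j k * pauli y k j) = if x = y then (2 : ℂ) else 0 := by
  fin_cases x <;> fin_cases y <;> simp [pauli, Fin.sum_univ_two] <;> norm_num

theorem pauli_string_trace_orthogonality (n : ℕ) (a b : Fin n → Fin 4) :
    Matrix.trace (PauliString a * PauliString b) =
      if a = b then (2 : ℂ) ^ n else 0 := by
  have h : Matrix.trace (PauliString a * PauliString b) =
      ∏ i, ∑ j, ∑ k, pauli (a i) j k * pauli (b i) k j := by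
    simp only [Matrix.trace, Matrix.diag, Matrix.mul_apply, PauliString, Matrix.of_apply,
      ← Finset.prod_mul_distrib, Finset.prod_univ_sum, Fintype.piFinset_univ]
  rw [h]
  simp only [pauli_single]
  split_ifs with hab
  · subst hab
    simp
  · obtain ⟨i, hi⟩ := Function.ne_iff.mp hab
    exact Finset.prod_eq_zero (Finset.mem_univ i) (if_neg hi)
end

section
/- Let d : ℕ, let U, C₁, C₂ be elements of the unitary group of d×d complex matrices with C₂ * U * C₁ = U, and let E be any d×d complex matrix. Define the controlled gates ctrl(W) = !![1,0;0,0] ⊗ₖ 1 + !![0,0;0,1] ⊗ₖ W (Kronecker product of a 2×2 matrix with a d×d matrix) and the plus-state projector Π₊ = !![1/2,1/2;1/2,1/2] ⊗ₖ 1. Then Π₊ * ctrl(C₂) * (1₂ ⊗ₖ (E * U)) * ctrl(C₁) * Π₊ = !![1/2,1/2;1/2,1/2] ⊗ₖ (((E + C₂ * E * C₂ᴴ)/2) * U). That is, one layer of Pauli check sandwiching with ancilla prepared and postselected in the |+⟩ state transforms the Kraus operator E of noise acting after U into E' = (E + C₂ E C₂†)/2. -/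
open Matrix Complex Kronecker

noncomputable def ctrl {d : ℕ} (W : Matrix (Fin d) (Fin d) ℂ) :
    Matrix (Fin 2 × Fin d) (Fin 2 × Fin d) ℂ :=
  (!![1, 0; 0, 0] : Matrix (Fin 2) (Fin 2) ℂ) ⊗ₖ (1 : Matrix (Fin d) (Fin d) ℂ) +
    (!![0, 0; 0, 1] : Matrix (Fin 2) (Fin 2) ℂ) ⊗ₖ W

noncomputable def plusProj (d : ℕ) : Matrix (Fin 2 × Fin d) (Fin 2 × Fin d) ℂ :=
  (!![1/2, 1/2; 1/2, 1/2] : Matrix (Fin 2) (Fin 2) ℂ) ⊗ₖ (1 : Matrix (Fin d) (Fin d) ℂ)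

theorem single_layer_pcs_transforms_kraus (d : ℕ)
    (U C₁ C₂ : Matrix.unitaryGroup (Fin d) ℂ)
    (hcheck : (C₂ : Matrix (Fin d) (Fin d) ℂ) * U * C₁ = U)
    (E : Matrix (Fin d) (Fin d) ℂ) :
    plusProj d * ctrl (C₂ : Matrix (Fin d) (Fin d) ℂ) *
        ((1 : Matrix (Fin 2) (Fin 2) ℂ) ⊗ₖ (E * (U : Matrix (Fin d) (Fin d) ℂ))) *
        ctrl (C₁ : Matrix (Fin d) (Fin d) ℂ) * plusProj d =
      (!![1/2, 1/2; 1/2, 1/2] : Matrix (Fin 2) (Fin 2) ℂ) ⊗ₖ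
        ((((1 : ℂ) / 2) •
            (E + (C₂ : Matrix (Fin d) (Fin d) ℂ) * E * (C₂ : Matrix (Fin d) (Fin d) ℂ)ᴴ)) *
          (U : Matrix (Fin d) (Fin d) ℂ)) := by
  have h2 : (C₂ : Matrix (Fin d) (Fin d) ℂ)ᴴ * (C₂ : Matrix (Fin d) (Fin d) ℂ) = 1 :=
    Matrix.mem_unitaryGroup_iff'.mp C₂.2
  obtain ⟨U, hU⟩ := U
  obtain ⟨A, hA⟩ := C₁
  obtain ⟨C, hC⟩ := C₂
  simp only at hcheck h2 ⊢
  have hUA : U * A = Cᴴ * U := by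
    calc U * A = (Cᴴ * C) * (U * A) := by rw [h2, one_mul]
      _ = Cᴴ * (C * U * A) := by simp only [mul_assoc]
      _ = Cᴴ * U := by rw [hcheck]
  have hP0 : (!![1/2, 1/2; 1/2, 1/2] : Matrix (Fin 2) (Fin 2) ℂ) * !![1, 0; 0, 0] *
      !![1, 0; 0, 0] * !![1/2, 1/2; 1/2, 1/2] = (1 / 2 : ℂ) • !![1/2, 1/2; 1/2, 1/2] := by
    ext i j; fin_cases i <;> fin_cases j <;> simp [Matrix.mul_apply, Fin.sum_univ_two]
  have hP1 : (!![1/2, 1/2; 1/2, 1/2] : Matrix (Fin 2) (Fin 2) ℂ) * !![0, 0; 0, 1] *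
      !![0, 0; 0, 1] * !![1/2, 1/2; 1/2, 1/2] = (1 / 2 : ℂ) • !![1/2, 1/2; 1/2, 1/2] := by
    ext i j; fin_cases i <;> fin_cases j <;> simp [Matrix.mul_apply, Fin.sum_univ_two]
  have h01 : (!![1/2, 1/2; 1/2, 1/2] : Matrix (Fin 2) (Fin 2) ℂ) * !![1, 0; 0, 0] *
      !![0, 0; 0, 1] = 0 := by
    ext i j; fin_cases i <;> fin_cases j <;> simp [Matrix.mul_apply, Fin.sum_univ_two]
  have h10 : (!![1/2, 1/2; 1/2, 1/2] : Matrix (Fin 2) (Fin 2) ℂ) * !![0, 0; 0, 1] *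
      !![1, 0; 0, 0] = 0 := by
    ext i j; fin_cases i <;> fin_cases j <;> simp [Matrix.mul_apply, Fin.sum_univ_two]
  have hK : C * (E * U) * A = C * E * Cᴴ * U := by
    simp only [mul_assoc, hUA]
  unfold plusProj ctrl
  simp only [mul_add, add_mul, ← Matrix.mul_kronecker_mul, mul_one, one_mul]
  rw [hP0, hP1, h01, h10, hK]
  simp only [zero_mul, Matrix.zero_kronecker, add_zero, zero_add, Matrix.smul_kronecker,
    Matrix.smul_mul, Matrix.kronecker_smul, add_mul, Matrix.kronecker_add, smul_add]
end

section
/- For every n : ℕ, all a b : Fin n → Fin 4, and every complex matrix E indexed by (Fin n → Fin 2), the check maps associated with Pauli strings commute: T_{P_a}(T_{P_b}(E)) = T_{P_b}(T_{P_a}(E)), where T_Q(M) = (Q * M * Q + M)/2. -/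
open Matrix Complex Kronecker

theorem pauli_comm_sign (x y : Fin 4) :
    ∃ s : ℂ, s * s = 1 ∧ pauli x * pauli y = s • (pauli y * pauli x) := by
  fin_cases x <;> fin_cases y <;>
  first
  | (refine ⟨1, by norm_num, ?_⟩
     ext i j
     fin_cases i <;> fin_cases j <;> simp [pauli, Matrix.mul_apply, Fin.sum_univ_two] <;> done)
  | (refine ⟨-1, by norm_num, ?_⟩
     ext i j
     fin_cases i <;> fin_cases j <;> simp [pauli, Matrix.mul_apply, Fin.sum_univ_two] <;> done)

theorem PauliString_mul_apply {n : ℕ} (a b : Fin n → Fin 4) (f g : Fin n → Fin 2) :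
    (PauliString a * PauliString b) f g = ∏ i, (pauli (a i) * pauli (b i)) (f i) (g i) := by
  simp only [Matrix.mul_apply, PauliString, Matrix.of_apply, ← Finset.prod_mul_distrib]
  rw [Finset.prod_univ_sum, Fintype.piFinset_univ]

theorem PauliString_comm_sign {n : ℕ} (a b : Fin n → Fin 4) :
    ∃ s : ℂ, s * s = 1 ∧
      PauliString a * PauliString b = s • (PauliString b * PauliString a) := by
  choose s hs hc using fun i => pauli_comm_sign (a i) (b i)
  refine ⟨∏ i, s i, ?_, ?_⟩
  · rw [← Finset.prod_mul_distrib]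
    exact Finset.prod_eq_one fun i _ => hs i
  · ext f g
    rw [Matrix.smul_apply, PauliString_mul_apply, PauliString_mul_apply, smul_eq_mul,
      ← Finset.prod_mul_distrib]
    refine Finset.prod_congr rfl fun i _ => ?_
    rw [hc i, Matrix.smul_apply, smul_eq_mul]

theorem pauli_check_maps_commute (n : ℕ) (a b : Fin n → Fin 4)
    (E : Matrix (Fin n → Fin 2) (Fin n → Fin 2) ℂ) :
    (fun M => ((1 : ℂ) / 2) • (PauliString a * M * PauliString a + M))
        ((fun M => ((1 : ℂ) / 2) • (PauliString b * M * PauliString b + M)) E) =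
      (fun M => ((1 : ℂ) / 2) • (PauliString b * M * PauliString b + M))
        ((fun M => ((1 : ℂ) / 2) • (PauliString a * M * PauliString a + M)) E) := by
  obtain ⟨s, hs, hc⟩ := PauliString_comm_sign a b
  have hc' : PauliString b * PauliString a = s • (PauliString a * PauliString b) := by
    rw [hc, smul_smul, hs, one_smul]
  have key : PauliString a * (PauliString b * E * PauliString b) * PauliString a =
      PauliString b * (PauliString a * E * PauliString a) * PauliString b := by
    calc _ = (PauliString a * PauliString b) * E * (PauliString b * PauliString a) := by
          simp only [Matrix.mul_assoc]
      _ = (s • (PauliString b * PauliString a)) * E * (s • (PauliString a * PauliString b)) := by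
          rw [← hc, ← hc']
      _ = (PauliString b * PauliString a) * E * (PauliString a * PauliString b) := by
          rw [Matrix.smul_mul, Matrix.smul_mul, Matrix.mul_smul, smul_smul, hs, one_smul]
      _ = _ := by simp only [Matrix.mul_assoc]
  simp only [Matrix.mul_smul, Matrix.smul_mul, Matrix.mul_add, Matrix.add_mul, key]
  module
end

section
/- (Unit Fidelity, channel form of Theorem 1.) Let n : ℕ, let l : List (Fin n → Fin 4) be a duplicate-free list containing every a : Fin n → Fin 4, let ι be a finite index type, and let (E_i)_{i : ι} be a family of complex matrices indexed by (Fin n → Fin 2). Write E'_i = l.foldl (fun M a => (P_a * M * P_a + M)/2) E_i for the Kraus operators after applying all 4^n layers of checks. Then for every matrix ρ indexed by (Fin n → Fin 2), ∑_{i} E'_i * ρ * (E'_i)ᴴ = ((∑_{i} Complex.normSq (trace E_i))/4^n) • ρ. In particular the postselected output of the mitigated circuit is proportional to the noiseless state, so the postselected state equals the noiseless state whenever the postselection probability is nonzero. -/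
open Matrix Complex Kronecker

noncomputable def pauliSign (a b : Fin 4) : ℂ := if a = 0 ∨ b = 0 ∨ a = b then 1 else -1

theorem pauliSign_sq (a b : Fin 4) : pauliSign a b * pauliSign a b = 1 := by
  unfold pauliSign; split_ifs <;> simp

theorem pauliSign_comm (a b : Fin 4) : pauliSign a b = pauliSign b a := by
  fin_cases a <;> fin_cases b <;> simp [pauliSign]

theorem pauli_mul_self (a : Fin 4) : pauli a * pauli a = 1 := by
  fin_cases a <;> ext i j <;> fin_cases i <;> fin_cases j <;> simp [pauli, Matrix.mul_apply]

theorem pauli_comm (a b : Fin 4) : pauli a * pauli b = pauliSign a b • (pauli b * pauli a) := by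
  fin_cases a <;> fin_cases b <;> ext i j <;> fin_cases i <;> fin_cases j <;>
    simp [pauli, pauliSign, Matrix.mul_apply]

theorem pauli_twirl (f k l g : Fin 2) :
    ∑ s, pauli s f k * pauli s l g = if f = g ∧ k = l then 2 else 0 := by
  fin_cases f <;> fin_cases k <;> fin_cases l <;> fin_cases g <;>
    simp [pauli, Fin.sum_univ_four] <;> norm_num

theorem PauliString_mul_self {n : ℕ} (a : Fin n → Fin 4) :
    PauliString a * PauliString a = 1 := by
  ext f g
  rw [PauliString_mul_apply]
  simp only [pauli_mul_self, Matrix.one_apply, Finset.prod_ite_zero, funext_iff]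
  simp

theorem PauliString_comm {n : ℕ} (a b : Fin n → Fin 4) :
    PauliString a * PauliString b =
      (∏ i, pauliSign (a i) (b i)) • (PauliString b * PauliString a) := by
  ext f g
  rw [Matrix.smul_apply, PauliString_mul_apply, PauliString_mul_apply, smul_eq_mul,
    ← Finset.prod_mul_distrib]
  refine Finset.prod_congr rfl fun i _ => ?_
  rw [pauli_comm, Matrix.smul_apply, smul_eq_mul]

theorem PauliString_conj_comm {n : ℕ} (a b : Fin n → Fin 4)
    (M : Matrix (Fin n → Fin 2) (Fin n → Fin 2) ℂ) :
    PauliString a * (PauliString b * M * PauliString b) * PauliString a =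
      PauliString b * (PauliString a * M * PauliString a) * PauliString b := by
  have h1 : PauliString a * (PauliString b * M * PauliString b) * PauliString a =
      (PauliString a * PauliString b) * M * (PauliString b * PauliString a) := by
    simp only [Matrix.mul_assoc]
  have h2 : PauliString b * (PauliString a * M * PauliString a) * PauliString b =
      (PauliString b * PauliString a) * M * (PauliString a * PauliString b) := by
    simp only [Matrix.mul_assoc]
  rw [h1, h2, PauliString_comm a b]
  simp only [Matrix.smul_mul, Matrix.mul_smul]

theorem PauliString_twirl {n : ℕ} (M : Matrix (Fin n → Fin 2) (Fin n → Fin 2) ℂ) :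
    ∑ a : Fin n → Fin 4, PauliString a * M * PauliString a =
      ((2 : ℂ) ^ n * M.trace) • (1 : Matrix (Fin n → Fin 2) (Fin n → Fin 2) ℂ) := by
  ext f g
  have key : ∀ k l : Fin n → Fin 2,
      ∑ a : Fin n → Fin 4, PauliString a f k * PauliString a l g =
        if f = g ∧ k = l then (2 : ℂ) ^ n else 0 := by
    intro k l
    simp only [PauliString, Matrix.of_apply, ← Finset.prod_mul_distrib]
    rw [← Fintype.piFinset_univ, ← Finset.prod_univ_sum (fun _ => Finset.univ)
      (fun i s => pauli s (f i) (k i) * pauli s (l i) (g i))]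
    simp only [pauli_twirl, Finset.prod_ite_zero, funext_iff, ← forall_and]
    simp
  calc (∑ a : Fin n → Fin 4, PauliString a * M * PauliString a) f g
      = ∑ a : Fin n → Fin 4, ∑ l, ∑ k, M k l * (PauliString a f k * PauliString a l g) := by
        rw [Matrix.sum_apply]
        refine Finset.sum_congr rfl fun a _ => ?_
        simp only [Matrix.mul_apply, Finset.sum_mul]
        refine Finset.sum_congr rfl fun l _ => Finset.sum_congr rfl fun k _ => ?_
        ring
    _ = ∑ l, ∑ k, M k l * ∑ a : Fin n → Fin 4, (PauliString a f k * PauliString a l g) := by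
        rw [Finset.sum_comm]
        refine Finset.sum_congr rfl fun l _ => ?_
        rw [Finset.sum_comm]
        simp only [Finset.mul_sum]
    _ = _ := by
        simp only [key, Matrix.smul_apply, Matrix.one_apply, smul_eq_mul]
        by_cases h : f = g
        · simp [h, Matrix.trace, Finset.mul_sum, mul_comm]
        · simp [h]

noncomputable def layer {n : ℕ} (M : Matrix (Fin n → Fin 2) (Fin n → Fin 2) ℂ)
    (a : Fin n → Fin 4) : Matrix (Fin n → Fin 2) (Fin n → Fin 2) ℂ :=
  ((1 : ℂ) / 2) • (PauliString a * M * PauliString a + M)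

theorem layer_trace {n : ℕ} (M : Matrix (Fin n → Fin 2) (Fin n → Fin 2) ℂ)
    (a : Fin n → Fin 4) : (layer M a).trace = M.trace := by
  rw [layer, Matrix.trace_smul, Matrix.trace_add, Matrix.trace_mul_comm, ← Matrix.mul_assoc,
    PauliString_mul_self, Matrix.one_mul, smul_eq_mul]
  ring

theorem layer_fix {n : ℕ} (M : Matrix (Fin n → Fin 2) (Fin n → Fin 2) ℂ)
    (a b : Fin n → Fin 4) (h : PauliString a * M * PauliString a = M) :
    PauliString a * layer M b * PauliString a = layer M b := by
  simp only [layer, Matrix.mul_smul, Matrix.smul_mul, Matrix.mul_add, Matrix.add_mul]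
  rw [PauliString_conj_comm, h]

theorem layer_self {n : ℕ} (M : Matrix (Fin n → Fin 2) (Fin n → Fin 2) ℂ)
    (a : Fin n → Fin 4) : PauliString a * layer M a * PauliString a = layer M a := by
  have h : PauliString a * (PauliString a * M * PauliString a) * PauliString a = M := by
    rw [Matrix.mul_assoc, Matrix.mul_assoc, Matrix.mul_assoc, PauliString_mul_self,
      Matrix.mul_one, ← Matrix.mul_assoc, PauliString_mul_self, Matrix.one_mul]
  simp only [layer, Matrix.mul_smul, Matrix.smul_mul, Matrix.mul_add, Matrix.add_mul]
  rw [h, add_comm]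

theorem foldl_trace {n : ℕ} (l : List (Fin n → Fin 4)) :
    ∀ M : Matrix (Fin n → Fin 2) (Fin n → Fin 2) ℂ, (l.foldl layer M).trace = M.trace := by
  induction l with
  | nil => intro M; rfl
  | cons b l ih => intro M; rw [List.foldl_cons, ih, layer_trace]

theorem foldl_fix {n : ℕ} (a : Fin n → Fin 4) (l : List (Fin n → Fin 4)) :
    ∀ M : Matrix (Fin n → Fin 2) (Fin n → Fin 2) ℂ,
      (a ∈ l ∨ PauliString a * M * PauliString a = M) →
      PauliString a * l.foldl layer M * PauliString a = l.foldl layer M := by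
  induction l with
  | nil => intro M h; simpa using h
  | cons b l ih =>
    intro M h
    rw [List.foldl_cons]
    apply ih
    rcases h with h | h
    · rcases List.mem_cons.1 h with h | h
      · subst h; exact Or.inr (layer_self M a)
      · exact Or.inl h
    · exact Or.inr (layer_fix M a b h)

theorem foldl_eq {n : ℕ} (l : List (Fin n → Fin 4)) (hmem : ∀ a : Fin n → Fin 4, a ∈ l)
    (M : Matrix (Fin n → Fin 2) (Fin n → Fin 2) ℂ) :
    l.foldl layer M = (M.trace / 2 ^ n) • (1 : Matrix (Fin n → Fin 2) (Fin n → Fin 2) ℂ) := by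
  have h := PauliString_twirl (l.foldl layer M)
  simp only [fun a => foldl_fix a l M (Or.inl (hmem a)), foldl_trace] at h
  rw [Finset.sum_const, Finset.card_univ, Fintype.card_fun, Fintype.card_fin, Fintype.card_fin,
    ← Nat.cast_smul_eq_nsmul ℂ] at h
  have h4 : ((4 ^ n : ℕ) : ℂ) = 2 ^ n * 2 ^ n := by
    push_cast; rw [← mul_pow]; norm_num
  have h2 : (2 : ℂ) ^ n ≠ 0 := pow_ne_zero n two_ne_zero
  rw [h4] at h
  have h' := congrArg (fun A => ((2 : ℂ) ^ n * 2 ^ n)⁻¹ • A) h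
  simp only [smul_smul] at h'
  rw [inv_mul_cancel₀ (mul_ne_zero h2 h2), one_smul] at h'
  rw [h']
  congr 1
  field_simp

theorem unit_fidelity_channel_form (n : ℕ) (l : List (Fin n → Fin 4))
    (hnd : l.Nodup) (hmem : ∀ a : Fin n → Fin 4, a ∈ l)
    (ι : Type) [Fintype ι] (E : ι → Matrix (Fin n → Fin 2) (Fin n → Fin 2) ℂ)
    (ρ : Matrix (Fin n → Fin 2) (Fin n → Fin 2) ℂ) :
    (∑ i : ι,
        (l.foldl (fun M a => ((1 : ℂ) / 2) • (PauliString a * M * PauliString a + M)) (E i)) *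
          ρ *
          (l.foldl (fun M a => ((1 : ℂ) / 2) • (PauliString a * M * PauliString a + M)) (E i))ᴴ) =
      (((∑ i : ι, (Complex.normSq (Matrix.trace (E i)) : ℂ)) / (4 : ℂ) ^ n)) • ρ := by
  have hf : (fun (M : Matrix (Fin n → Fin 2) (Fin n → Fin 2) ℂ) (a : Fin n → Fin 4) =>
      ((1 : ℂ) / 2) • (PauliString a * M * PauliString a + M)) = layer := rfl
  rw [hf, Finset.sum_div, Finset.sum_smul]
  refine Finset.sum_congr rfl fun i _ => ?_
  rw [foldl_eq l hmem, Matrix.conjTranspose_smul, Matrix.conjTranspose_one, Matrix.smul_mul,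
    Matrix.one_mul, Matrix.mul_smul, Matrix.mul_one, smul_smul]
  congr 1
  have h4 : (4 : ℂ) ^ n = 2 ^ n * 2 ^ n := by
    rw [← mul_pow]; norm_num
  rw [Complex.normSq_eq_conj_mul_self, h4]
  simp only [star_div₀, star_pow, Complex.star_def, map_ofNat]
  rw [div_mul_div_comm]
end

section
/- (Lemma 1: two layers of maximum-weight checks detect all weight-one Kraus errors.) Let n : ℕ, k : Fin n, and A : Matrix (Fin 2) (Fin 2) ℂ, and let E be the weight-one operator acting as A on qubit k: the matrix indexed by (Fin n → Fin 2) with entries E f g = A (f k) (g k) * ∏_{i ≠ k} (if f i = g i then 1 else 0). Let X⁽ⁿ⁾ = P_{fun _ => 1} and Z⁽ⁿ⁾ = P_{fun _ => 3}. Then applying the two check layers gives (Z⁽ⁿ⁾ * M * Z⁽ⁿ⁾ + M)/2 = ((trace A)/2) • 1, where M = (X⁽ⁿ⁾ * E * X⁽ⁿ⁾ + E)/2. That is, the two checks X^{⊗n} and Z^{⊗n} reduce every weight-one Kraus operator to a scalar multiple of the identity. -/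
open Matrix Complex Kronecker

/-- The tensor product of one-qubit matrices. -/
noncomputable def tens {n : ℕ} (B : Fin n → Matrix (Fin 2) (Fin 2) ℂ) :
    Matrix (Fin n → Fin 2) (Fin n → Fin 2) ℂ :=
  Matrix.of fun f g => ∏ i, B i (f i) (g i)

/-- The weight-one operator acting as `A` on qubit `k`. -/
noncomputable def wone {n : ℕ} (k : Fin n) (A : Matrix (Fin 2) (Fin 2) ℂ) :
    Matrix (Fin n → Fin 2) (Fin n → Fin 2) ℂ :=
  Matrix.of fun f g =>
    A (f k) (g k) * ∏ i ∈ Finset.univ.erase k, (if f i = g i then (1 : ℂ) else 0)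

lemma tens_mul {n : ℕ} (B C : Fin n → Matrix (Fin 2) (Fin 2) ℂ) :
    tens B * tens C = tens (fun i => B i * C i) := by
  ext f g
  simp only [tens, Matrix.mul_apply, Matrix.of_apply]
  rw [Finset.prod_univ_sum, Fintype.piFinset_univ]
  simp only [Finset.prod_mul_distrib]

lemma wone_eq_tens {n : ℕ} (k : Fin n) (A : Matrix (Fin 2) (Fin 2) ℂ) :
    wone k A = tens (fun i => if i = k then A else 1) := by
  ext f g
  simp only [tens, wone, Matrix.of_apply]
  rw [← Finset.mul_prod_erase Finset.univ _ (Finset.mem_univ k), if_pos rfl]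
  congr 1
  refine Finset.prod_congr rfl fun i hi => ?_
  rw [if_neg (Finset.ne_of_mem_erase hi), Matrix.one_apply]

lemma conj_wone {n : ℕ} (k : Fin n) (A : Matrix (Fin 2) (Fin 2) ℂ) (a : Fin 4)
    (ha : pauli a * pauli a = 1) :
    PauliString (fun _ : Fin n => a) * wone k A * PauliString (fun _ : Fin n => a)
      = wone k (pauli a * A * pauli a) := by
  have h : PauliString (fun _ : Fin n => a) = tens (fun _ => pauli a) := rfl
  rw [h, wone_eq_tens, wone_eq_tens, tens_mul, tens_mul]
  congr 1
  funext i
  by_cases hi : i = k <;> simp [hi, ha]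

lemma wone_add {n : ℕ} (k : Fin n) (A B : Matrix (Fin 2) (Fin 2) ℂ) :
    wone k A + wone k B = wone k (A + B) := by
  ext f g
  simp [wone, add_mul]

lemma wone_smul {n : ℕ} (k : Fin n) (c : ℂ) (A : Matrix (Fin 2) (Fin 2) ℂ) :
    c • wone k A = wone k (c • A) := by
  ext f g
  simp [wone, mul_assoc]

lemma wone_one {n : ℕ} (k : Fin n) : wone k 1 = 1 := by
  rw [wone_eq_tens]
  ext f g
  simp only [tens, ite_self, Matrix.of_apply, Matrix.one_apply]
  rw [Fintype.prod_ite_zero]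
  simp [funext_iff]

theorem two_max_weight_checks_detect_weight_one_errors (n : ℕ) (k : Fin n)
    (A : Matrix (Fin 2) (Fin 2) ℂ) :
    let E : Matrix (Fin n → Fin 2) (Fin n → Fin 2) ℂ :=
      Matrix.of fun f g =>
        A (f k) (g k) * ∏ i ∈ Finset.univ.erase k, (if f i = g i then (1 : ℂ) else 0)
    let Xn : Matrix (Fin n → Fin 2) (Fin n → Fin 2) ℂ :=
      PauliString (fun _ : Fin n => (1 : Fin 4))
    let Zn : Matrix (Fin n → Fin 2) (Fin n → Fin 2) ℂ :=
      PauliString (fun _ : Fin n => (3 : Fin 4))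
    let M : Matrix (Fin n → Fin 2) (Fin n → Fin 2) ℂ :=
      ((1 : ℂ) / 2) • (Xn * E * Xn + E)
    ((1 : ℂ) / 2) • (Zn * M * Zn + M) =
      (Matrix.trace A / 2) • (1 : Matrix (Fin n → Fin 2) (Fin n → Fin 2) ℂ) := by
  intro E Xn Zn M
  have hE : E = wone k A := rfl
  have hx : pauli 1 * pauli 1 = 1 := by
    ext i j; fin_cases i <;> fin_cases j <;> simp [pauli]
  have hz : pauli 3 * pauli 3 = 1 := by
    ext i j; fin_cases i <;> fin_cases j <;> simp [pauli]
  have hM : M = wone k ((1 / 2 : ℂ) • (pauli 1 * A * pauli 1 + A)) := by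
    simp only [M, Xn, hE]
    rw [conj_wone k A 1 hx, wone_add, wone_smul]
  rw [hM]
  simp only [Zn]
  rw [conj_wone k _ 3 hz, wone_add, wone_smul, ← wone_one k, wone_smul]
  congr 1
  ext i j
  simp only [Matrix.mul_apply, Fin.sum_univ_two, Matrix.trace, Matrix.smul_apply,
    Matrix.add_apply, Matrix.diag_apply]
  fin_cases i <;> fin_cases j <;> simp [pauli] <;> ring
end

section
/- (Lemma 2: 2n weight-one checks detect all errors.) Let n : ℕ. For k : Fin n define e(k,m) : Fin n → Fin 4 to equal m at index k and 0 elsewhere, and set X_k = P_{e(k,1)}, Z_k = P_{e(k,3)}. Then for every complex matrix E indexed by (Fin n → Fin 2), folding the 2n check maps over all k — i.e. (List.finRange n).foldl (fun M k => T_{Z_k}(T_{X_k}(M))) E with T_Q(M) = (Q * M * Q + M)/2 — equals ((trace E)/2^n) • 1. That is, the 2n distinct weight-one checks {X_k, Z_k : k < n} reduce every Kraus operator to a scalar multiple of the identity. -/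
open Matrix Complex Kronecker

def flipAt {n : ℕ} (k : Fin n) (f : Fin n → Fin 2) : Fin n → Fin 2 :=
  Function.update f k (f k + 1)

lemma fin2_add (a : Fin 2) : a + 1 + 1 = a := by
  revert a; decide

lemma flipAt_flipAt {n : ℕ} (k : Fin n) (f : Fin n → Fin 2) : flipAt k (flipAt k f) = f := by
  simp [flipAt, fin2_add]

lemma flipAt_comm {n : ℕ} (k j : Fin n) (f : Fin n → Fin 2) :
    flipAt k (flipAt j f) = flipAt j (flipAt k f) := by
  by_cases h : k = j
  · rw [h]
  · funext i
    simp only [flipAt, Function.update_apply]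
    split_ifs <;> simp_all

lemma pauli_zero_apply (a b : Fin 2) : pauli 0 a b = if a = b then 1 else 0 := by
  fin_cases a <;> fin_cases b <;> simp [pauli]

lemma pauli_one_apply (a b : Fin 2) : pauli 1 a b = if a + 1 = b then 1 else 0 := by
  fin_cases a <;> fin_cases b <;> simp [pauli]

lemma pauli_three_apply (a b : Fin 2) :
    pauli 3 a b = if a = b then (if a = 0 then 1 else -1) else 0 := by
  fin_cases a <;> fin_cases b <;> simp [pauli]

lemma X_apply {n : ℕ} (k : Fin n) (f g : Fin n → Fin 2) :
    PauliString (fun i : Fin n => if i = k then (1 : Fin 4) else 0) f g =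
      if flipAt k f = g then 1 else 0 := by
  have h : ∀ i, pauli (if i = k then (1 : Fin 4) else 0) (f i) (g i) =
      if flipAt k f i = g i then 1 else 0 := by
    intro i
    by_cases hi : i = k
    · subst hi; simp [pauli_one_apply, flipAt]
    · simp [hi, pauli_zero_apply, flipAt]
  simp only [PauliString, Matrix.of_apply, h, Finset.prod_ite_zero, funext_iff]
  simp

lemma Z_eq {n : ℕ} (k : Fin n) :
    PauliString (fun i : Fin n => if i = k then (3 : Fin 4) else 0) =
      Matrix.diagonal (fun f : Fin n → Fin 2 => if f k = 0 then (1 : ℂ) else -1) := by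
  ext f g
  have h : ∀ i, pauli (if i = k then (3 : Fin 4) else 0) (f i) (g i) =
      if f i = g i then (if i = k then (if f k = 0 then 1 else -1) else 1) else 0 := by
    intro i
    by_cases hi : i = k
    · subst hi; simp [pauli_three_apply]
    · simp [hi, pauli_zero_apply]
  simp only [PauliString, Matrix.of_apply, h, Finset.prod_ite_zero, Matrix.diagonal_apply,
    funext_iff]
  simp

lemma X_conj {n : ℕ} (k : Fin n) (M : Matrix (Fin n → Fin 2) (Fin n → Fin 2) ℂ)
    (f g : Fin n → Fin 2) :
    (PauliString (fun i : Fin n => if i = k then (1 : Fin 4) else 0) * M *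
      PauliString (fun i : Fin n => if i = k then (1 : Fin 4) else 0)) f g =
      M (flipAt k f) (flipAt k g) := by
  have h : ∀ x, (flipAt k x = g) = (x = flipAt k g) := by
    intro x
    apply propext
    constructor
    · rintro rfl; rw [flipAt_flipAt]
    · rintro rfl; rw [flipAt_flipAt]
  simp [Matrix.mul_apply, X_apply, h]

/-- The combined X and Z check at position `k`, in coordinates. -/
noncomputable def checkStep {n : ℕ} (M : Matrix (Fin n → Fin 2) (Fin n → Fin 2) ℂ) (k : Fin n) :
    Matrix (Fin n → Fin 2) (Fin n → Fin 2) ℂ :=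
  Matrix.of fun f g => if f k = g k then (M (flipAt k f) (flipAt k g) + M f g) / 2 else 0

def Good {n : ℕ} (k : Fin n) (M : Matrix (Fin n → Fin 2) (Fin n → Fin 2) ℂ) : Prop :=
  ∀ f g, M (flipAt k f) (flipAt k g) = M f g ∧ (f k ≠ g k → M f g = 0)

lemma flipAt_eq_iff {n : ℕ} (k j : Fin n) (f g : Fin n → Fin 2) :
    flipAt k f j = flipAt k g j ↔ f j = g j := by
  by_cases h : j = k
  · subst h; simp [flipAt]
  · simp [flipAt, h]

lemma good_self {n : ℕ} (k : Fin n) (M : Matrix (Fin n → Fin 2) (Fin n → Fin 2) ℂ) :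
    Good k (checkStep M k) := by
  intro f g
  constructor
  · simp only [checkStep, Matrix.of_apply, flipAt_eq_iff, flipAt_flipAt, add_comm]
  · intro h; simp [checkStep, h]

lemma good_step {n : ℕ} (k j : Fin n) (M : Matrix (Fin n → Fin 2) (Fin n → Fin 2) ℂ)
    (h : Good k M) : Good k (checkStep M j) := by
  intro f g
  constructor
  · simp only [checkStep, Matrix.of_apply, flipAt_eq_iff]
    rw [flipAt_comm j k f, flipAt_comm j k g, (h _ _).1, (h _ _).1]
  · intro hk
    simp only [checkStep, Matrix.of_apply]
    rw [(h f g).2 hk, (h _ _).2 ((flipAt_eq_iff j k f g).not.mpr hk)]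
    simp

lemma trace_step {n : ℕ} (k : Fin n) (M : Matrix (Fin n → Fin 2) (Fin n → Fin 2) ℂ) :
    Matrix.trace (checkStep M k) = Matrix.trace M := by
  have h : ∑ f, M (flipAt k f) (flipAt k f) = ∑ f, M f f :=
    Equiv.sum_comp (Function.Involutive.toPerm (flipAt k) (flipAt_flipAt k)) (fun f => M f f)
  simp only [Matrix.trace, Matrix.diag_apply, checkStep, Matrix.of_apply, if_true]
  rw [← Finset.sum_div, Finset.sum_add_distrib, h]
  ring

lemma good_foldl {n : ℕ} (k : Fin n) (l : List (Fin n)) :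
    ∀ M : Matrix (Fin n → Fin 2) (Fin n → Fin 2) ℂ, (k ∈ l ∨ Good k M) →
      Good k (l.foldl checkStep M) := by
  induction l with
  | nil => intro M h; simpa using h
  | cons j l ih =>
    intro M h
    refine ih _ ?_
    rcases h with h | h
    · rcases List.mem_cons.mp h with h | h
      · subst h; exact Or.inr (good_self _ _)
      · exact Or.inl h
    · exact Or.inr (good_step _ _ _ h)

lemma trace_foldl {n : ℕ} (l : List (Fin n)) :
    ∀ M : Matrix (Fin n → Fin 2) (Fin n → Fin 2) ℂ,
      Matrix.trace (l.foldl checkStep M) = Matrix.trace M := by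
  induction l with
  | nil => intro M; rfl
  | cons j l ih => intro M; rw [List.foldl_cons, ih, trace_step]

lemma good_diag {n : ℕ} (M : Matrix (Fin n → Fin 2) (Fin n → Fin 2) ℂ)
    (h : ∀ k, Good k M) (f : Fin n → Fin 2) : M f f = M 0 0 := by
  have hu : ∀ (g : Fin n → Fin 2) k v,
      M (Function.update g k v) (Function.update g k v) = M g g := by
    intro g k v
    by_cases hv : v = g k
    · rw [hv, Function.update_eq_self]
    · have : v = g k + 1 := by
        generalize g k = a at hv
        revert v a; decide
      rw [this]
      exact (h k g g).1
  have hs : ∀ s : Finset (Fin n), M (s.piecewise f 0) (s.piecewise f 0) = M 0 0 := by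
    intro s
    induction s using Finset.induction_on with
    | empty => simp
    | insert a s _ ih => rw [Finset.piecewise_insert, hu, ih]
  simpa using hs Finset.univ

lemma good_scalar {n : ℕ} (M : Matrix (Fin n → Fin 2) (Fin n → Fin 2) ℂ)
    (h : ∀ k, Good k M) : M = (Matrix.trace M / (2 : ℂ) ^ n) • 1 := by
  have ht : Matrix.trace M = 2 ^ n * M 0 0 := by
    simp only [Matrix.trace, Matrix.diag_apply, good_diag M h]
    simp
  ext f g
  rw [ht, mul_div_cancel_left₀ _ (pow_ne_zero n two_ne_zero)]
  by_cases hfg : f = g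
  · subst hfg; simp [good_diag M h f]
  · obtain ⟨k, hk⟩ := Function.ne_iff.mp hfg
    simp [hfg, (h k f g).2 hk]

theorem two_n_weight_one_checks_detect_all_errors (n : ℕ)
    (E : Matrix (Fin n → Fin 2) (Fin n → Fin 2) ℂ) :
    (List.finRange n).foldl
        (fun M k =>
          ((1 : ℂ) / 2) •
            (PauliString (fun i : Fin n => if i = k then (3 : Fin 4) else 0) *
                (((1 : ℂ) / 2) •
                  (PauliString (fun i : Fin n => if i = k then (1 : Fin 4) else 0) * M *
                      PauliString (fun i : Fin n => if i = k then (1 : Fin 4) else 0) +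
                    M)) *
                PauliString (fun i : Fin n => if i = k then (3 : Fin 4) else 0) +
              ((1 : ℂ) / 2) •
                (PauliString (fun i : Fin n => if i = k then (1 : Fin 4) else 0) * M *
                    PauliString (fun i : Fin n => if i = k then (1 : Fin 4) else 0) +
                  M)))
        E =
      (Matrix.trace E / (2 : ℂ) ^ n) • (1 : Matrix (Fin n → Fin 2) (Fin n → Fin 2) ℂ) := by
  have h := good_scalar ((List.finRange n).foldl checkStep E)
    (fun k => good_foldl k _ E (Or.inl (List.mem_finRange k)))
  rw [trace_foldl] at h
  rw [← h]
  congr 1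
  funext M k
  ext f g
  simp only [Z_eq, Matrix.smul_apply, Matrix.add_apply, Matrix.mul_diagonal,
    Matrix.diagonal_mul, X_conj, smul_eq_mul, checkStep, Matrix.of_apply]
  have hd : ∀ a : Fin 2, a = 0 ∨ a = 1 := by decide
  rcases hd (f k) with h1 | h1 <;> rcases hd (g k) with h2 | h2 <;> simp [h1, h2] <;> ring
end

section
/- (Single layer is insufficient.) For every C in the unitary group of 2×2 complex matrices, there exists a 2×2 complex matrix E in the unitary group such that E is not a scalar multiple of the identity matrix and (C * E * Cᴴ + E)/2 = E. Consequently, one layer of Pauli check sandwiching with check C cannot eliminate all weight-one errors, so at least two layers are necessary to detect all weight-one errors. -/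
open Matrix

theorem single_layer_insufficient (C : Matrix.unitaryGroup (Fin 2) ℂ) :
    ∃ E : Matrix (Fin 2) (Fin 2) ℂ,
      E ∈ Matrix.unitaryGroup (Fin 2) ℂ ∧
      (∀ c : ℂ, E ≠ c • (1 : Matrix (Fin 2) (Fin 2) ℂ)) ∧
      ((1 : ℂ) / 2) •
          ((C : Matrix (Fin 2) (Fin 2) ℂ) * E * (C : Matrix (Fin 2) (Fin 2) ℂ)ᴴ + E) = E := by
  obtain ⟨C, hC⟩ := C
  have h1 : C * Cᴴ = 1 := Matrix.mem_unitaryGroup_iff.mp hC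
  have half : ∀ E : Matrix (Fin 2) (Fin 2) ℂ, C * E * Cᴴ = E →
      ((1 : ℂ) / 2) • (C * E * Cᴴ + E) = E := by
    intro E h
    rw [h, ← two_smul ℂ E, smul_smul]
    norm_num
  by_cases h : ∃ c : ℂ, C = c • (1 : Matrix (Fin 2) (Fin 2) ℂ)
  · obtain ⟨c, hc⟩ := h
    refine ⟨!![1, 0; 0, -1], ?_, ?_, half _ ?_⟩
    · rw [Matrix.mem_unitaryGroup_iff]
      ext i j
      fin_cases i <;> fin_cases j <;> simp [Matrix.mul_apply, Matrix.star_apply]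
    · intro d hd
      have h00 := congrFun (congrFun hd 0) 0
      have h11 := congrFun (congrFun hd 1) 1
      simp at h00 h11
      rw [← h00] at h11
      norm_num at h11
    · have comm : C * !![1, 0; 0, -1] = !![1, 0; 0, -1] * C := by
        rw [hc]; simp
      rw [comm, Matrix.mul_assoc, h1, Matrix.mul_one]
  · push Not at h
    exact ⟨C, hC, h, half C (by rw [Matrix.mul_assoc, h1, Matrix.mul_one])⟩
end

section
/- (n-qubit Pauli twirl.) For every n : ℕ and every complex matrix E indexed by (Fin n → Fin 2), (1/4^n) • ∑_{a : Fin n → Fin 4} P_a * E * P_a = ((trace E)/2^n) • 1, where 1 is the identity matrix; that is, twirling over the 4^n Pauli strings sends every matrix to the corresponding scalar multiple of the identity. -/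
open Matrix Complex Kronecker

theorem pauli_complete (f g h k : Fin 2) :
    ∑ b, pauli b f g * pauli b h k = if f = k ∧ g = h then 2 else 0 := by
  fin_cases f <;> fin_cases g <;> fin_cases h <;> fin_cases k <;>
    simp [Fin.sum_univ_four, pauli] <;> norm_num

theorem pauliString_complete {n : ℕ} (f g h k : Fin n → Fin 2) :
    ∑ a : Fin n → Fin 4, PauliString a f g * PauliString a h k =
      if f = k ∧ g = h then (2 : ℂ) ^ n else 0 := by
  simp only [PauliString, Matrix.of_apply, ← Finset.prod_mul_distrib]
  rw [← Fintype.prod_sum (fun i b => pauli b (f i) (g i) * pauli b (h i) (k i))]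
  simp only [pauli_complete]
  split_ifs with hc
  · obtain ⟨rfl, rfl⟩ := hc
    simp
  · have : ∃ i, ¬ (f i = k i ∧ g i = h i) := by
      by_contra hne
      push Not at hne
      exact hc ⟨funext fun i => (hne i).1, funext fun i => (hne i).2⟩
    obtain ⟨i, hi⟩ := this
    exact Finset.prod_eq_zero (Finset.mem_univ i) (if_neg hi)

theorem n_qubit_pauli_twirl (n : ℕ)
    (E : Matrix (Fin n → Fin 2) (Fin n → Fin 2) ℂ) :
    ((1 : ℂ) / 4 ^ n) • ∑ a : Fin n → Fin 4, PauliString a * E * PauliString a =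
      (Matrix.trace E / (2 : ℂ) ^ n) • (1 : Matrix (Fin n → Fin 2) (Fin n → Fin 2) ℂ) := by
  have key : ∀ f k, (∑ a : Fin n → Fin 4, PauliString a * E * PauliString a) f k =
      ∑ h, ∑ g, (if f = k ∧ g = h then (2 : ℂ) ^ n else 0) * E g h := by
    intro f k
    simp only [Matrix.sum_apply, Matrix.mul_apply, Finset.sum_mul]
    rw [Finset.sum_comm]
    refine Finset.sum_congr rfl fun h _ => ?_
    rw [Finset.sum_comm]
    refine Finset.sum_congr rfl fun g _ => ?_
    rw [← pauliString_complete f g h k, Finset.sum_mul]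
    exact Finset.sum_congr rfl fun a _ => by ring
  ext f k
  rw [Matrix.smul_apply, key, Matrix.smul_apply, Matrix.one_apply]
  by_cases hfk : f = k
  · have h4 : (4 : ℂ) ^ n = 2 ^ n * 2 ^ n := by rw [← mul_pow]; norm_num
    simp only [hfk, true_and, ite_mul, zero_mul, Finset.sum_ite_eq', Finset.mem_univ, if_true,
      smul_eq_mul, ← Finset.mul_sum, h4, Matrix.trace, Matrix.diag_apply, mul_one]
    field_simp
  · simp [hfk]
end
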